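/- The set of positive integers k such that 2^k is not separable has lower asymptotic density at least 1/3. -/

import Mathlib

/-!
Let `m` interlock with `2 ^ k`, where `k ≥ 4`. The divisors of `m` exceeding `1` are interleaved
with the powers `2, 4, …, 2 ^ k`, so distinct divisors of `m` have distinct binary logarithms, and
the number `τ(m)` of divisors of `m` is `k` or `k + 1`. Moreover `3 ∣ m`, and `5 ∣ m` or `7 ∣ m`.
Pairs such as `9, 15` or `75, 125` or `49, 63` have the same binary logarithm, so they cannot both
divide `m`; this leaves only `(1, 1)`, `(1, 2)` and `(2, 1)` as exponents of `3` and `5` (or `7`)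
in `m`. Hence `τ(m)` is a multiple of `4` or `6`. But if `k` is `1`, `2`, `9` or `10` modulo `12`,
then neither `k` nor `k + 1` is a multiple of `4` or `6`, so `2 ^ k` is not separable. These four
residue classes have density `4 / 12`.
-/

open scoped Classical

/-- `(m, n)` is an interlocking pair: both are positive, and between any two
consecutive divisors (the smaller one exceeding 1) of either number there is a
divisor of the other. -/
def Interlocking (m n : ℕ) : Prop :=
  0 < m ∧ 0 < n ∧
  (∀ d d' : ℕ, d ∣ n → d' ∣ n → 1 < d → d < d' →
    (∀ e : ℕ, e ∣ n → ¬(d < e ∧ e < d')) →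
    ∃ e : ℕ, e ∣ m ∧ d < e ∧ e < d') ∧
  (∀ d d' : ℕ, d ∣ m → d' ∣ m → 1 < d → d < d' →
    (∀ e : ℕ, e ∣ m → ¬(d < e ∧ e < d')) →
    ∃ e : ℕ, e ∣ n ∧ d < e ∧ e < d')

/-- A positive integer `n` is separable if some `m` interlocks with it. -/
def Separable (n : ℕ) : Prop := ∃ m : ℕ, Interlocking m n

namespace Interlocking

variable {m n p k d d' i : ℕ}

lemma symm (h : Interlocking m n) : Interlocking n m :=
  ⟨h.2.1, h.1, h.2.2.2, h.2.2.1⟩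

lemma exists_dvd_between (h : Interlocking m n) (hd : d ∣ n) (hd' : d' ∣ n) (one_lt : 1 < d)
    (hlt : d < d') : ∃ e, e ∣ m ∧ d < e ∧ e < d' := by
  have hnext : ∃ c, c ∣ n ∧ d < c := ⟨d', hd', hlt⟩
  obtain ⟨hc, hdc⟩ := Nat.find_spec hnext
  obtain ⟨e, he, hde, hec⟩ := h.2.2.1 d (Nat.find hnext) hd hc one_lt hdc
    fun e he hlt' => Nat.find_min hnext hlt'.2 ⟨he, hlt'.1⟩
  exact ⟨e, he, hde, hec.trans_le (Nat.find_min' hnext ⟨hd', hlt⟩)⟩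

lemma card_divisors_le_add_one (h : Interlocking m n) :
    n.divisors.card ≤ m.divisors.card + 1 := by
  have hle : (n.divisors.erase 1).card ≤ (m.divisors.erase 1).card + 1 := by
    refine Finset.card_le_of_interleaved fun d hd d' hd' hlt _ => ?_
    simp only [Finset.mem_erase, Nat.mem_divisors] at hd hd' ⊢
    have one_lt : 1 < d := lt_of_le_of_ne (Nat.pos_of_dvd_of_pos hd.2.1 h.2.1) hd.1.symm
    obtain ⟨e, he, hde, hed⟩ := h.exists_dvd_between hd.2.1 hd'.2.1 one_lt hlt
    exact ⟨e, ⟨by omega, he, h.1.ne'⟩, hde, hed⟩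
  rwa [← Nat.add_le_add_iff_right (n := 1),
    Finset.card_erase_add_one (Nat.one_mem_divisors.2 h.2.1.ne'), add_right_comm,
    Finset.card_erase_add_one (Nat.one_mem_divisors.2 h.1.ne')] at hle

/-- The divisor `2` of `n` separates `1` from the next divisor of `m`, so all divisors of `m` are
interleaved with the divisors of `n` other than `1`. -/
lemma card_divisors_le_of_odd_of_even (h : Interlocking m n) (hm : Odd m) (hn : Even n) :
    m.divisors.card ≤ n.divisors.card := by
  rw [← Finset.card_erase_add_one (Nat.one_mem_divisors.2 h.2.1.ne')]
  refine Finset.card_le_of_interleaved fun d hd d' hd' hlt _ => ?_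
  simp only [Finset.mem_erase, Nat.mem_divisors] at hd hd' ⊢
  obtain rfl | one_lt := (Nat.succ_le_of_lt (Nat.pos_of_dvd_of_pos hd.1 h.1)).eq_or_lt
  · have two_ne : 2 ≠ d' := by
      rintro rfl
      exact hm.not_two_dvd_nat hd'.1
    exact ⟨2, ⟨by norm_num, hn.two_dvd, h.2.1.ne'⟩, by norm_num, by omega⟩
  · obtain ⟨e, he, hde, hed⟩ := h.symm.exists_dvd_between hd.1 hd'.1 one_lt hlt
    exact ⟨e, ⟨by omega, he, h.2.1.ne'⟩, hde, hed⟩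

lemma exists_dvd_between_pow (h : Interlocking m (p ^ k)) (hp : 1 < p) (hi : i ≠ 0) (hik : i < k) :
    ∃ e, e ∣ m ∧ p ^ i < e ∧ e < p ^ (i + 1) :=
  h.exists_dvd_between (pow_dvd_pow p hik.le) (pow_dvd_pow p hik) (Nat.one_lt_pow hi hp)
    (Nat.pow_lt_pow_succ hp)

lemma strictMonoOn_log (h : Interlocking m (p ^ k)) (hp : p.Prime) :
    StrictMonoOn (Nat.log p) {d | d ∣ m ∧ 1 < d} := by
  rintro d ⟨hd, one_lt⟩ d' ⟨hd', -⟩ hlt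
  obtain ⟨e, he, hde, hed⟩ := h.symm.exists_dvd_between hd hd' one_lt hlt
  obtain ⟨j, -, rfl⟩ := (Nat.dvd_prime_pow hp).1 he
  exact (Nat.log_lt_of_lt_pow (by omega) hde).trans_le (Nat.le_log_of_pow_le hp.one_lt hed.le)

lemma strictMonoOn_log_two (h : Interlocking m (2 ^ k)) :
    StrictMonoOn (Nat.log 2) {d | d ∣ m} := by
  intro d hd d' hd' hlt
  obtain rfl | one_lt := (Nat.succ_le_of_lt (Nat.pos_of_dvd_of_pos hd h.1)).eq_or_lt
  · rw [Nat.log_one_right]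
    exact Nat.log_pos one_lt_two hlt
  · exact h.strictMonoOn_log Nat.prime_two ⟨hd, one_lt⟩ ⟨hd', one_lt.trans hlt⟩ hlt

lemma not_dvd_of_log_two_eq (h : Interlocking m (2 ^ k)) (hd : d ∣ m)
    (hlog : Nat.log 2 d = Nat.log 2 d') (hne : d ≠ d') : ¬ d' ∣ m := fun hd' =>
  hne (h.strictMonoOn_log_two.injOn hd hd' hlog)

lemma three_dvd (h : Interlocking m (2 ^ k)) (hk : 2 ≤ k) : 3 ∣ m := by
  obtain ⟨e, he, two_lt, lt_four⟩ := h.exists_dvd_between_pow one_lt_two one_ne_zero hk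
  obtain rfl : e = 3 := by omega
  exact he

lemma odd (h : Interlocking m (2 ^ k)) (hk : 2 ≤ k) : Odd m := by
  rw [← Nat.not_even_iff_odd, even_iff_two_dvd]
  exact h.not_dvd_of_log_two_eq (h.three_dvd hk) (by norm_num) (by norm_num)

lemma five_dvd_or_seven_dvd (h : Interlocking m (2 ^ k)) (hk : 3 ≤ k) : 5 ∣ m ∨ 7 ∣ m := by
  obtain ⟨e, he, four_lt, lt_eight⟩ := h.exists_dvd_between_pow one_lt_two two_ne_zero hk
  have hodd : Odd e := (h.odd (by omega)).of_dvd_nat he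
  obtain rfl | rfl : e = 5 ∨ e = 7 := by grind
  exacts [.inl he, .inr he]

lemma card_divisors_eq_or_eq_add_one (h : Interlocking m (2 ^ k)) (hk : 2 ≤ k) :
    m.divisors.card = k ∨ m.divisors.card = k + 1 := by
  have hpow : (2 ^ k).divisors.card = k + 1 := by
    rw [Nat.divisors_prime_pow Nat.prime_two, Finset.card_map, Finset.card_range]
  have hge := h.card_divisors_le_add_one
  have hle := h.card_divisors_le_of_odd_of_even (h.odd hk) (even_two.pow_of_ne_zero (by omega))
  omega

end Interlocking

lemma mul_dvd_card_divisors {p q e f m : ℕ} (hp : p.Prime) (hq : q.Prime) (hpq : p ≠ q)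
    (hpe : p ^ e ∣ m) (hpe' : ¬ p ^ (e + 1) ∣ m) (hqf : q ^ f ∣ m) (hqf' : ¬ q ^ (f + 1) ∣ m) :
    (e + 1) * (f + 1) ∣ m.divisors.card := by
  obtain ⟨s, rfl⟩ := hpe
  have hps : p.Coprime s := hp.coprime_iff_not_dvd.2 fun hps =>
    hpe' (pow_succ p e ▸ mul_dvd_mul_left _ hps)
  have hqp : q.Coprime p := (Nat.coprime_primes hq hp).2 hpq.symm
  obtain ⟨r, rfl⟩ := (hqp.pow f e).dvd_of_dvd_mul_left hqf
  have hqr : q.Coprime r := hq.coprime_iff_not_dvd.2 fun hqr =>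
    hqf' ((pow_succ q f ▸ mul_dvd_mul_left _ hqr).mul_left _)
  rw [(hps.pow_left e).card_divisors_mul, (hqr.pow_left f).card_divisors_mul,
    Nat.divisors_prime_pow hp, Nat.divisors_prime_pow hq]
  simp only [Finset.card_map, Finset.card_range, ← mul_assoc, dvd_mul_right]

namespace Interlocking

variable {m k : ℕ}

lemma four_or_six_dvd_card_divisors_of_five_dvd (h : Interlocking m (2 ^ k)) (h3 : 3 ∣ m)
    (h5 : 5 ∣ m) : 4 ∣ m.divisors.card ∨ 6 ∣ m.divisors.card := by
  have h15 : 15 ∣ m := by omega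
  have h9 : ¬ 9 ∣ m := h.not_dvd_of_log_two_eq h15 (by norm_num) (by norm_num)
  by_cases h25 : 25 ∣ m
  · have h75 : 75 ∣ m := by omega
    have h125 : ¬ 125 ∣ m := h.not_dvd_of_log_two_eq h75 (by norm_num) (by norm_num)
    exact .inr (mul_dvd_card_divisors (e := 1) (f := 2) Nat.prime_three Nat.prime_five
      (by norm_num) h3 h9 h25 h125)
  · exact .inl (mul_dvd_card_divisors (e := 1) (f := 1) Nat.prime_three Nat.prime_five
      (by norm_num) h3 h9 h5 h25)

lemma four_or_six_dvd_card_divisors_of_seven_dvd (h : Interlocking m (2 ^ k)) (hk : 4 ≤ k)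
    (h3 : 3 ∣ m) (h7 : 7 ∣ m) : 4 ∣ m.divisors.card ∨ 6 ∣ m.divisors.card := by
  by_cases h9 : 9 ∣ m
  · have h21 : 21 ∣ m := by omega
    have h63 : 63 ∣ m := by omega
    have h27 : ¬ 27 ∣ m := h.not_dvd_of_log_two_eq h21 (by norm_num) (by norm_num)
    have h49 : ¬ 49 ∣ m := h.not_dvd_of_log_two_eq h63 (by norm_num) (by norm_num)
    exact .inr (mul_dvd_card_divisors (e := 2) (f := 1) Nat.prime_three Nat.prime_seven
      (by norm_num) h9 h27 h7 h49)
  · have h5 : ¬ 5 ∣ m := h.not_dvd_of_log_two_eq h7 (by norm_num) (by norm_num)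
    have h33_or_h39 : 33 ∣ m ∨ 39 ∣ m := by
      obtain ⟨c, hc, eight_lt, lt_sixteen⟩ :=
        h.exists_dvd_between_pow one_lt_two three_ne_zero hk
      have hodd : Odd c := (h.odd (by omega)).of_dvd_nat hc
      obtain rfl | rfl | rfl | rfl : c = 9 ∨ c = 11 ∨ c = 13 ∨ c = 15 := by grind
      all_goals omega
    have h49 : ¬ 49 ∣ m := by
      obtain h33 | h39 := h33_or_h39
      · exact h.not_dvd_of_log_two_eq h33 (by norm_num) (by norm_num)
      · exact h.not_dvd_of_log_two_eq h39 (by norm_num) (by norm_num)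
    exact .inl (mul_dvd_card_divisors (e := 1) (f := 1) Nat.prime_three Nat.prime_seven
      (by norm_num) h3 h9 h7 h49)

lemma four_or_six_dvd_card_divisors (h : Interlocking m (2 ^ k)) (hk : 4 ≤ k) :
    4 ∣ m.divisors.card ∨ 6 ∣ m.divisors.card := by
  have h3 := h.three_dvd (by omega)
  obtain h5 | h7 := h.five_dvd_or_seven_dvd (by omega)
  · exact h.four_or_six_dvd_card_divisors_of_five_dvd h3 h5
  · exact h.four_or_six_dvd_card_divisors_of_seven_dvd hk h3 h7

end Interlocking

lemma not_separable_two_pow {k : ℕ} (hk : 4 ≤ k)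
    (hmod : k % 12 ∈ ({1, 2, 9, 10} : Finset ℕ)) : ¬ Separable (2 ^ k) := by
  rintro ⟨m, h⟩
  have hcard := h.card_divisors_eq_or_eq_add_one (by omega)
  have hdvd := h.four_or_six_dvd_card_divisors hk
  simp only [Finset.mem_insert, Finset.mem_singleton] at hmod
  omega

section LowerDensity

open Filter

variable {P Q : ℕ → Prop} [DecidablePred P] [DecidablePred Q]

/-- The lower asymptotic density of the set of positive integers `k` with `P k`. The set is given
by a decidable predicate so that its counting function is the cardinality of a filtered `Finset`. -/
noncomputable def lowerDensity (P : ℕ → Prop) [DecidablePred P] : ℝ :=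
  liminf (fun x : ℕ => (((Finset.Icc 1 x).filter P).card : ℝ) / x) atTop

lemma le_lowerDensity_of_mul_le_card_add {c C : ℝ}
    (h : ∀ x : ℕ, c * x ≤ ((Finset.Icc 1 x).filter P).card + C) : c ≤ lowerDensity P := by
  have hlim : Tendsto (fun x : ℕ => c - C / x) atTop (nhds c) := by
    simpa using tendsto_const_nhds.sub (tendsto_const_div_atTop_nhds_zero_nat C)
  have hratio_le_one (x : ℕ) : (((Finset.Icc 1 x).filter P).card : ℝ) / x ≤ 1 := by
    have hcard := Finset.card_filter_le (Finset.Icc 1 x) P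
    rw [Nat.card_Icc, Nat.add_sub_cancel] at hcard
    exact div_le_one_of_le₀ (by exact_mod_cast hcard) x.cast_nonneg
  rw [← hlim.liminf_eq]
  refine liminf_le_liminf ?_ hlim.isBoundedUnder_ge (isCoboundedUnder_ge_of_le atTop hratio_le_one)
  filter_upwards [eventually_gt_atTop 0] with x hx
  have hx' : (0 : ℝ) < x := Nat.cast_pos.2 hx
  rw [le_div_iff₀ hx', sub_mul, div_mul_cancel₀ _ hx'.ne']
  linarith [h x]

lemma count_mul_of_periodic {a : ℕ} (hP : Function.Periodic P a) (q : ℕ) :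
    Nat.count P (a * q) = Nat.count P a * q := by
  induction q with
  | zero => simp
  | succ q ih =>
    have hshift : (fun k => P (a * q + k)) = P := funext fun k => by
      rw [add_comm, mul_comm]
      exact hP.nat_mul q k
    simp only [Nat.mul_succ, Nat.count_add, ih, hshift]

lemma count_le_card_filter_Icc_add {N : ℕ} (h : ∀ k ≥ N, P k → Q k) (x : ℕ) :
    Nat.count P x ≤ ((Finset.Icc 1 x).filter Q).card + (N + 1) := by
  have hsub : (Finset.range x).filter P ⊆ (Finset.Icc 1 x).filter Q ∪ Finset.range (N + 1) := by
    intro k hk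
    simp only [Finset.mem_filter, Finset.mem_range, Finset.mem_union, Finset.mem_Icc] at hk ⊢
    by_cases hkN : k < N + 1
    · exact .inr hkN
    · exact .inl ⟨by omega, h k (by omega) hk.2⟩
  calc Nat.count P x = ((Finset.range x).filter P).card := Nat.count_eq_card_filter_range P x
    _ ≤ ((Finset.Icc 1 x).filter Q ∪ Finset.range (N + 1)).card := Finset.card_le_card hsub
    _ ≤ ((Finset.Icc 1 x).filter Q).card + (N + 1) := by
      simpa only [Finset.card_range] using Finset.card_union_le _ (Finset.range (N + 1))

lemma count_div_le_lowerDensity_of_periodic {a : ℕ} (hP : Function.Periodic P a)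
    (h : ∀ᶠ k in atTop, P k → Q k) : (Nat.count P a : ℝ) / a ≤ lowerDensity Q := by
  obtain ⟨N, hN⟩ := eventually_atTop.1 h
  refine le_lowerDensity_of_mul_le_card_add (C := N + 1 + Nat.count P a) fun x => ?_
  have hfloor : (x : ℝ) / a ≤ (x / a : ℕ) + 1 := by
    rw [← Nat.floor_div_eq_div (K := ℝ)]
    exact (Nat.lt_floor_add_one _).le
  have hcount : Nat.count P a * (x / a) ≤ ((Finset.Icc 1 x).filter Q).card + (N + 1) :=
    calc Nat.count P a * (x / a) = Nat.count P (a * (x / a)) := (count_mul_of_periodic hP _).symm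
      _ ≤ Nat.count P x := Nat.count_monotone P (Nat.mul_div_le x a)
      _ ≤ _ := count_le_card_filter_Icc_add hN x
  calc (Nat.count P a : ℝ) / a * x = Nat.count P a * ((x : ℝ) / a) := by ring
    _ ≤ Nat.count P a * ((x / a : ℕ) + 1) := by gcongr
    _ = (Nat.count P a * (x / a) : ℕ) + Nat.count P a := by push_cast; ring
    _ ≤ (((Finset.Icc 1 x).filter Q).card + (N + 1) : ℕ) + Nat.count P a := by gcongr
    _ = ((Finset.Icc 1 x).filter Q).card + (N + 1 + Nat.count P a) := by push_cast; ring

end LowerDensity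

/-- The set of positive integers `k` such that `2^k` is not separable has lower
asymptotic density at least `1/3`. -/
theorem lowerDensity_two_pow_not_separable :
    (1 : ℝ) / 3 ≤ Filter.liminf
      (fun x : ℕ => (((Finset.Icc 1 x).filter fun k => ¬ Separable (2 ^ k)).card : ℝ) / x)
      Filter.atTop := by
  have hperiodic : Function.Periodic (fun k => k % 12 ∈ ({1, 2, 9, 10} : Finset ℕ)) 12 :=
    fun k => by simp only [Nat.add_mod_right]
  have hcount : Nat.count (fun k => k % 12 ∈ ({1, 2, 9, 10} : Finset ℕ)) 12 = 4 := by decide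
  have hnot : ∀ᶠ k in Filter.atTop,
      k % 12 ∈ ({1, 2, 9, 10} : Finset ℕ) → ¬ Separable (2 ^ k) :=
    Filter.eventually_atTop.2 ⟨4, fun k => not_separable_two_pow⟩
  calc (1 : ℝ) / 3 = (4 : ℕ) / (12 : ℕ) := by norm_num
    _ ≤ lowerDensity fun k => ¬ Separable (2 ^ k) :=
      hcount ▸ count_div_le_lowerDensity_of_periodic hperiodic hnot
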